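/- arXiv:1908.03912 — 3 statements merged into one kernel-verified Lean document; each statement's English description precedes it below -/
import Mathlib

section
/- For every integer n ≥ 1, r(n,0) = Σ_{j=0}^{n-1} 2^j · r(n-1,j). -/
/-!
A Schröder path is either empty, or `H` followed by a path, or `U a D b` with paths `a`, `b`
(first-return decomposition), so Schröder paths are in bijection with the trees `STree` below;
`SStep.parse` is a left inverse of the encoding `STree.word`, and every path is the word of
a tree (`exists_tree_of_validFrom`). An arch `U a D b` contributes a hill exactly
when `a` is empty.

Let `R_t = ∑ r(n,k) t^k x^n`, a power series in `x`. The decomposition gives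
`R_t * (1 - x R_1 - t x) = 1` (a rearrangement of
`genFun_eq`). Write `a = 1 - x R_1`. Then `R_0 * a = 1` and `R_2 * (a - 2x) = 1`, while the
equation at `t = 1` reads `a ^ 2 - (1 + x) * a + 2 * x = 0`; together these force
`R_0 = 1 + x R_2` (`genFun_zero_eq`), whose coefficient at `x ^ n` is the claim.
-/

/-- A step of a Schröder path: up `(1,1)`, down `(1,-1)`, or horizontal `(2,0)`. -/
inductive SStep : Type
  | U | D | H
  deriving DecidableEq

/-- `IsSchroeder n w` : `w` is a Schröder path of semilength `n`. -/
def IsSchroeder (n : ℕ) (w : List SStep) : Prop :=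
  w.count SStep.U = w.count SStep.D ∧
  w.count SStep.U + w.count SStep.H = n ∧
  ∀ i : ℕ, (w.take i).count SStep.D ≤ (w.take i).count SStep.U

/-- The number of hills: occurrences of the factor `UD` starting at height `0`. -/
def hills (w : List SStep) : ℕ :=
  ((Finset.range w.length).filter (fun i =>
    w[i]? = some SStep.U ∧ w[i+1]? = some SStep.D ∧
    (w.take i).count SStep.U = (w.take i).count SStep.D)).card

/-- The number of horizontal steps at height `0`. -/
def h0 (w : List SStep) : ℕ :=
  ((Finset.range w.length).filter (fun i =>
    w[i]? = some SStep.H ∧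
    (w.take i).count SStep.U = (w.take i).count SStep.D)).card

/-- The number of horizontal steps at positive height. -/
def hpos (w : List SStep) : ℕ :=
  ((Finset.range w.length).filter (fun i =>
    w[i]? = some SStep.H ∧
    (w.take i).count SStep.D < (w.take i).count SStep.U)).card

/-- `r n k` : the number of Schröder paths of semilength `n` with exactly `k` hills. -/
noncomputable def r (n k : ℕ) : ℕ :=
  Nat.card {w : List SStep // IsSchroeder n w ∧ hills w = k}

/-- A little Schröder path: a Schröder path with no horizontal step at height `0`. -/
def IsLittle (n : ℕ) (w : List SStep) : Prop :=
  IsSchroeder n w ∧ h0 w = 0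

/-- `s n k` : the number of little Schröder paths of semilength `n` with exactly `k` hills. -/
noncomputable def s (n k : ℕ) : ℕ :=
  Nat.card {w : List SStep // IsLittle n w ∧ hills w = k}

/-- Schröder paths by first-return decomposition: `nil` is the empty path, `flat p` is `H p` and
`arch a b` is `U a D b`. -/
inductive STree : Type
  | nil
  | flat (p : STree)
  | arch (a b : STree)
  deriving DecidableEq

namespace STree

/-- The lattice word encoded by a tree. -/
def word : STree → List SStep
  | nil => []
  | flat p => SStep.H :: word p
  | arch a b => SStep.U :: (word a ++ SStep.D :: word b)

/-- The semilength of the path. -/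
def size : STree → ℕ
  | nil => 0
  | flat p => size p + 1
  | arch a b => size a + size b + 1

/-- The number of hills of the path: arches at height `0` with nothing beneath them. -/
def hillCount : STree → ℕ
  | nil => 0
  | flat p => hillCount p
  | arch a b => (if a = nil then 1 else 0) + hillCount b

lemma hillCount_le_size (p : STree) : hillCount p ≤ size p := by
  induction p with
  | nil => simp [hillCount]
  | flat p ih => simp only [hillCount, size]; omega
  | arch a b _ ihb => simp only [hillCount, size]; split_ifs <;> omega

end STree

open STree

/-! ### Words and trees -/

/-- Reads a word running from height `h` down to `0` as the list of the `h + 1` Schröder paths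
separated by the first down step to each of the heights `h - 1, ..., 0`; on other words the value is irrelevant. -/
def SStep.parse : List SStep → List STree
  | [] => [nil]
  | SStep.H :: w => match SStep.parse w with
    | t :: ts => flat t :: ts
    | [] => []
  | SStep.D :: w => nil :: SStep.parse w
  | SStep.U :: w => match SStep.parse w with
    | a :: b :: ts => arch a b :: ts
    | _ => []

lemma parse_word_append (t : STree) : ∀ (w : List SStep) (ts : List STree),
    SStep.parse w = nil :: ts → SStep.parse (word t ++ w) = t :: ts := by
  induction t with
  | nil => intro w ts h; simpa [word] using h
  | flat p ih => intro w ts h; simp [word, SStep.parse, ih w ts h]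
  | arch a b iha ihb =>
    intro w ts h
    have h1 : SStep.parse (SStep.D :: (word b ++ w)) = nil :: b :: ts := by
      simp [SStep.parse, ihb w ts h]
    simp [word, SStep.parse, iha _ _ h1]

lemma word_injective : Function.Injective word := by
  intro s t h
  have hs := parse_word_append s [] [] rfl
  have ht := parse_word_append t [] [] rfl
  rw [h, ht] at hs
  simpa using hs.symm

/-- `ValidFrom h w`: the word `w`, started at height `h`, stays weakly above the axis and ends
on it. -/
def ValidFrom : ℕ → List SStep → Prop
  | h, [] => h = 0
  | h, SStep.U :: w => ValidFrom (h + 1) w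
  | 0, SStep.D :: _ => False
  | h + 1, SStep.D :: w => ValidFrom h w
  | h, SStep.H :: w => ValidFrom h w

lemma validFrom_iff (w : List SStep) : ∀ h : ℕ, ValidFrom h w ↔
    h + w.count SStep.U = w.count SStep.D ∧
    ∀ i : ℕ, (w.take i).count SStep.D ≤ h + (w.take i).count SStep.U := by
  induction w with
  | nil => intro h; simp [ValidFrom]
  | cons x w ih =>
    intro h
    -- The prefix condition for `x :: w` splits off the prefix of length `0`.
    have key : ∀ P : ℕ → Prop, (∀ i, P i) ↔ P 0 ∧ ∀ i, P (i + 1) :=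
      fun P => ⟨fun H => ⟨H 0, fun i => H _⟩, fun H i => by cases i; exacts [H.1, H.2 _]⟩
    rw [key]
    cases x with
    | U =>
      simp only [ValidFrom, ih, List.take_succ_cons, List.take_zero]
      simp [add_comm, add_left_comm]
    | H =>
      simp only [ValidFrom, ih, List.take_succ_cons, List.take_zero]
      simp
    | D =>
      cases h with
      | zero =>
        simp only [ValidFrom, false_iff, List.take_succ_cons]
        rintro ⟨_, _, h⟩
        have := h 0
        simp at this
      | succ h =>
        simp only [ValidFrom, ih, List.take_succ_cons, List.take_zero]
        simp only [List.count_cons, List.count_nil]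
        simp only [beq_self_eq_true, if_true, reduceCtorEq, beq_iff_eq, if_false]
        constructor
        · rintro ⟨h1, h2⟩
          exact ⟨by omega, by omega, fun i => by have := h2 i; omega⟩
        · rintro ⟨h1, -, h2⟩
          exact ⟨by omega, fun i => by have := h2 i; omega⟩

lemma validFrom_word_append (t : STree) : ∀ (h : ℕ) (w : List SStep),
    ValidFrom h (word t ++ w) ↔ ValidFrom h w := by
  induction t with
  | nil => intro h w; simp [word]
  | flat p ih => intro h w; simp [word, ValidFrom, ih]
  | arch a b iha ihb => intro h w; simp [word, ValidFrom, iha, ihb]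

/-- Every valid word started at height `h` is a Schröder path followed, if `h > 0`, by a down step
and a valid word from height `h - 1`. -/
lemma exists_tree_of_validFrom (w : List SStep) : ∀ h : ℕ, ValidFrom h w →
    ∃ t : STree, (h = 0 ∧ w = word t) ∨
      ∃ k v, h = k + 1 ∧ w = word t ++ SStep.D :: v ∧ ValidFrom k v := by
  induction hn : w.length using Nat.strong_induction_on generalizing w with
  | _ n ih =>
  intro h hw
  match w, h, hw with
  | [], h, hw => exact ⟨nil, Or.inl ⟨hw, rfl⟩⟩
  | SStep.H :: w, h, hw =>
    simp only [ValidFrom] at hw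
    obtain ⟨t, ht⟩ := ih w.length (by simp [← hn]) w rfl h hw
    refine ⟨flat t, ?_⟩
    rcases ht with ⟨h0, rfl⟩ | ⟨k, v, hk, rfl, hv⟩
    · exact Or.inl ⟨h0, rfl⟩
    · exact Or.inr ⟨k, v, hk, rfl, hv⟩
  | SStep.D :: w, h + 1, hw => exact ⟨nil, Or.inr ⟨h, w, rfl, rfl, hw⟩⟩
  | SStep.U :: w, h, hw =>
    simp only [ValidFrom] at hw
    obtain ⟨a, ⟨h0, -⟩ | ⟨k, v, hk, rfl, hv⟩⟩ := ih w.length (by simp [← hn]) w rfl _ hw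
    · omega
    obtain rfl : h = k := by omega
    obtain ⟨b, hb⟩ := ih v.length (by simp [← hn]; omega) v rfl _ hv
    refine ⟨arch a b, ?_⟩
    rcases hb with ⟨h0, rfl⟩ | ⟨l, u, hl, rfl, hu⟩
    · exact Or.inl ⟨h0, rfl⟩
    · exact Or.inr ⟨l, u, hl, by simp [word], hu⟩

lemma count_word (t : STree) :
    (word t).count SStep.U + (word t).count SStep.H = size t := by
  induction t with
  | nil => simp [word, size]
  | flat p ih => simp [word, size]; omega
  | arch a b iha ihb => simp [word, size]; omega

lemma isSchroeder_iff (n : ℕ) (w : List SStep) :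
    IsSchroeder n w ↔ ∃ t : STree, size t = n ∧ word t = w := by
  have hv : IsSchroeder n w ↔
      ValidFrom 0 w ∧ w.count SStep.U + w.count SStep.H = n := by
    rw [validFrom_iff]; simp only [IsSchroeder, zero_add]; tauto
  rw [hv]
  constructor
  · rintro ⟨h1, h2⟩
    obtain ⟨t, ⟨-, rfl⟩ | ⟨k, v, hk, -⟩⟩ := exists_tree_of_validFrom w 0 h1
    · exact ⟨t, by rw [← h2, count_word], rfl⟩
    · omega
  · rintro ⟨t, rfl, rfl⟩
    refine ⟨?_, count_word t⟩
    simpa [ValidFrom] using validFrom_word_append t 0 []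

/-! ### Hills -/

/-- The number of factors `UD` starting at height `0` when the word `w` itself starts at
height `h`. -/
def hillsFrom (h : ℕ) (w : List SStep) : ℕ :=
  ((Finset.range w.length).filter (fun i =>
    w[i]? = some SStep.U ∧ w[i+1]? = some SStep.D ∧
    h + (w.take i).count SStep.U = (w.take i).count SStep.D)).card

lemma hillsFrom_cons_aux (x : SStep) (w : List SStep) (h : ℕ) :
    hillsFrom h (x :: w) = (if x = SStep.U ∧ w[0]? = some SStep.D ∧ h = 0 then 1 else 0) +
      ((Finset.range w.length).filter (fun i =>
        w[i]? = some SStep.U ∧ w[i+1]? = some SStep.D ∧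
        h + (x :: w.take i).count SStep.U = (x :: w.take i).count SStep.D)).card := by
  simp only [hillsFrom, Finset.card_filter, List.length_cons, Finset.sum_range_succ']
  rw [add_comm]
  simp only [List.getElem?_cons_succ, List.getElem?_cons_zero, List.take_succ_cons, Option.some.injEq,
    List.take_zero, List.count_nil, add_zero, zero_add]
  congr!

lemma hillsFrom_U (w : List SStep) (h : ℕ) : hillsFrom h (SStep.U :: w) =
    (if w[0]? = some SStep.D ∧ h = 0 then 1 else 0) + hillsFrom (h + 1) w := by
  rw [hillsFrom_cons_aux]
  simp [hillsFrom, add_assoc, add_comm 1]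

lemma hillsFrom_H (w : List SStep) (h : ℕ) : hillsFrom h (SStep.H :: w) = hillsFrom h w := by
  rw [hillsFrom_cons_aux]
  simp [hillsFrom]

lemma hillsFrom_D (w : List SStep) (h : ℕ) :
    hillsFrom (h + 1) (SStep.D :: w) = hillsFrom h w := by
  rw [hillsFrom_cons_aux]
  simp [hillsFrom, add_right_comm]

lemma hillsFrom_succ_word_append (t : STree) : ∀ (h : ℕ) (w : List SStep),
    hillsFrom (h + 1) (word t ++ w) = hillsFrom (h + 1) w := by
  induction t with
  | nil => intro h w; simp [word]
  | flat p ih => intro h w; simp [word, hillsFrom_H, ih]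
  | arch a b iha ihb => intro h w; simp [word, hillsFrom_U, hillsFrom_D, iha, ihb]

lemma hills_word (t : STree) : hills (word t) = hillCount t := by
  have h0 : hills (word t) = hillsFrom 0 (word t) := by simp [hills, hillsFrom]
  rw [h0]
  clear h0
  induction t with
  | nil => simp [word, hillsFrom, hillCount]
  | flat p ih => simp [word, hillsFrom_H, hillCount, ih]
  | arch a b _ ihb =>
    have hD : (word a ++ SStep.D :: word b)[0]? = some SStep.D ↔ a = nil := by
      cases a <;> simp [word]
    rw [word, hillsFrom_U, hillsFrom_succ_word_append, hillsFrom_D, ihb]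
    simp only [hD, hillCount, and_true]

/-! ### Generating functions -/

/-- The finite set of trees of a given size. -/
def treesOf : ℕ → Finset STree
  | 0 => {nil}
  | n + 1 => (treesOf n).image flat ∪ (Finset.HasAntidiagonal.antidiagonal n).attach.biUnion fun ij =>
      have := Finset.HasAntidiagonal.mem_antidiagonal.1 ij.2
      (treesOf ij.1.1 ×ˢ treesOf ij.1.2).image fun p => arch p.1 p.2
  decreasing_by all_goals omega

lemma mem_treesOf (t : STree) : ∀ n : ℕ, t ∈ treesOf n ↔ size t = n := by
  induction t with
  | nil => intro n; cases n <;> simp [treesOf, size]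
  | flat p ih => intro n; cases n <;> simp [treesOf, size, ih]
  | arch a b iha ihb => intro n; cases n <;> simp [treesOf, size, iha, ihb]

lemma sum_treesOf_succ (f : STree → ℤ) (n : ℕ) :
    ∑ t ∈ treesOf (n + 1), f t = ∑ t ∈ treesOf n, f (flat t) +
      ∑ ij ∈ Finset.HasAntidiagonal.antidiagonal n, ∑ a ∈ treesOf ij.1, ∑ b ∈ treesOf ij.2, f (arch a b) := by
  have hset : treesOf (n + 1) = (treesOf n).image flat ∪ (Finset.HasAntidiagonal.antidiagonal n).biUnion fun ij =>
      (treesOf ij.1 ×ˢ treesOf ij.2).image fun p => arch p.1 p.2 := by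
    ext t
    cases t <;> simp [mem_treesOf, size]
  rw [hset, Finset.sum_union, Finset.sum_image, Finset.sum_biUnion]
  · congr 1
    refine Finset.sum_congr rfl fun ij _ => ?_
    rw [Finset.sum_image, Finset.sum_product]
    rintro ⟨a, b⟩ _ ⟨c, d⟩ _ h
    simpa using h
  · rintro ⟨i, j⟩ _ ⟨k, l⟩ _ hne
    simp only [Function.onFun, Finset.disjoint_left, Finset.mem_image, Finset.mem_product,
      mem_treesOf]
    rintro _ ⟨⟨a, b⟩, ⟨ha, hb⟩, rfl⟩ ⟨⟨c, d⟩, ⟨hc, hd⟩, h⟩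
    simp only [arch.injEq] at h
    apply hne
    rw [← ha, ← hb, ← hc, ← hd, h.1, h.2]
  · intro a _ b _ h
    simpa using h
  · simp only [Finset.disjoint_left, Finset.mem_image, Finset.mem_biUnion]
    rintro _ ⟨a, _, rfl⟩ ⟨_, _, p, _, h⟩
    simp at h

/-- The generating function `∑ t ^ (number of hills) * X ^ (semilength)` of Schröder paths. -/
noncomputable def genFun (t : ℤ) : PowerSeries ℤ :=
  PowerSeries.mk fun n => ∑ p ∈ treesOf n, t ^ hillCount p

/-- The functional equation given by the first-return decomposition: the part below the first
arch is counted by `genFun 1`, corrected by `t - 1` when that part is empty. -/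
lemma genFun_eq (t : ℤ) : genFun t = 1 + PowerSeries.X * genFun t +
    PowerSeries.X * ((genFun 1 + PowerSeries.C (t - 1)) * genFun t) := by
  have hc : ∀ i, PowerSeries.coeff i (genFun 1 + PowerSeries.C (t - 1)) =
      ∑ a ∈ treesOf i, t ^ (if a = nil then 1 else 0) := by
    intro i
    have h1 : ∀ a : STree, t ^ (if a = nil then 1 else 0) =
        1 + if a = nil then t - 1 else 0 := by
      intro a; split_ifs <;> simp
    simp only [h1, Finset.sum_add_distrib, Finset.sum_ite_eq', mem_treesOf, size, genFun,
      map_add, PowerSeries.coeff_mk, PowerSeries.coeff_C, one_pow, eq_comm]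
  ext n
  cases n with
  | zero => simp [genFun, treesOf, hillCount]
  | succ n =>
    rw [map_add, map_add, PowerSeries.coeff_succ_X_mul, PowerSeries.coeff_succ_X_mul,
      PowerSeries.coeff_mul]
    simp only [hc]
    simp only [genFun, PowerSeries.coeff_mk, PowerSeries.coeff_one, sum_treesOf_succ, hillCount,
      pow_add, Finset.sum_mul_sum]
    simp

lemma genFun_zero_eq : genFun 0 = 1 + PowerSeries.X * genFun 2 := by
  have h0 := genFun_eq 0
  have h1 := genFun_eq 1
  have h2 := genFun_eq 2
  simp only [zero_sub, sub_self, map_neg, map_one, map_zero, add_zero,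
    show (2 : ℤ) - 1 = 1 from rfl] at h0 h1 h2
  generalize genFun 0 = A at *
  generalize genFun 1 = S at *
  generalize genFun 2 = B at *
  generalize (PowerSeries.X : PowerSeries ℤ) = x at *
  -- `A` and `B` are the inverses of `a = 1 - x S` and `a - 2 x`.
  have hA : A * (1 - x * S) = 1 := by linear_combination h0
  have hB : B * (1 - x * S - 2 * x) = 1 := by linear_combination h2
  have hS : (1 - x * S) ^ 2 - (1 + x) * (1 - x * S) + 2 * x = 0 := by
    linear_combination (-x) * h1
  generalize 1 - x * S = a at *
  have hab : a - 2 * x = a * (a - 2 * x) + x * a := by linear_combination -hS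
  linear_combination (A * B) * hab + (1 + x * B) * hA + (A * a - A) * hB

/-! ### Conclusion -/

lemma r_eq_card (n k : ℕ) : r n k = ((treesOf n).filter fun t => hillCount t = k).card := by
  rw [r, ← Nat.card_eq_finsetCard]
  symm
  refine Nat.card_congr (Equiv.ofBijective
    (fun t => ⟨word t.1, (isSchroeder_iff _ _).2 ⟨t.1, ?_, rfl⟩, ?_⟩) ⟨?_, ?_⟩)
  · exact (mem_treesOf _ _).1 (Finset.mem_filter.1 t.2).1
  · rw [hills_word]; exact (Finset.mem_filter.1 t.2).2
  · intro s t h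
    exact Subtype.ext (word_injective (congrArg Subtype.val h))
  · rintro ⟨w, hw, hk⟩
    obtain ⟨t, ht, rfl⟩ := (isSchroeder_iff _ _).1 hw
    exact ⟨⟨t, Finset.mem_filter.2 ⟨(mem_treesOf _ _).2 ht, by rw [← hk, hills_word]⟩⟩, rfl⟩

/-- For every integer `n ≥ 1`, `r(n,0) = Σ_{j=0}^{n-1} 2^j ⬝ r(n-1,j)`. -/
theorem stmt0 (n : ℕ) (hn : 1 ≤ n) :
    r n 0 = ∑ j ∈ Finset.range n, 2 ^ j * r (n - 1) j := by
  obtain ⟨m, rfl⟩ : ∃ m, n = m + 1 := ⟨n - 1, by omega⟩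
  have h := congrArg (PowerSeries.coeff (m + 1)) genFun_zero_eq
  rw [map_add, PowerSeries.coeff_succ_X_mul] at h
  simp only [genFun, PowerSeries.coeff_mk, PowerSeries.coeff_one, zero_pow_eq] at h
  have hmaps : ∀ t ∈ treesOf m, hillCount t ∈ Finset.range (m + 1) := by
    intro t ht
    have := hillCount_le_size t
    rw [mem_treesOf] at ht
    simp; omega
  rw [← Finset.sum_fiberwise_of_maps_to hmaps] at h
  zify
  simp only [r_eq_card, Nat.add_sub_cancel, Finset.card_filter] at h ⊢
  push_cast
  rw [h]
  simp only [Nat.add_eq_zero_iff, one_ne_zero, and_false, if_false, zero_add]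
  refine Finset.sum_congr rfl fun j _ => ?_
  rw [Finset.sum_filter, Finset.mul_sum]
  refine Finset.sum_congr rfl fun t _ => ?_
  split_ifs with h <;> simp [h]
end

section
/- For all integers 0 ≤ k ≤ n, r(n,k) = Σ Π_{i=1}^{k+1} r(n_i,0), where the sum is over all (k+1)-tuples (n_1,...,n_{k+1}) of nonnegative integers with n_1 + ... + n_{k+1} = n − k. (Equivalently, the triangle [r(n,k)] is a Riordan array of Bell type: every Schröder path with k hills decomposes uniquely as p_1 UD p_2 UD ... UD p_{k+1} with each p_i a hill-free Schröder path.) -/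
/-- `w` has a hill starting at position `i`. -/
def IsHillAt (w : List SStep) (i : ℕ) : Prop :=
  w[i]? = some SStep.U ∧ w[i+1]? = some SStep.D ∧
    (w.take i).count SStep.U = (w.take i).count SStep.D

lemma IsHillAt.lt {w : List SStep} {i : ℕ} (h : IsHillAt w i) : i < w.length := by
  have := h.1
  by_contra hc
  rw [List.getElem?_eq_none (by omega)] at this
  simp at this

lemma hills_eq_ncard (w : List SStep) : hills w = {i | IsHillAt w i}.ncard := by
  rw [hills, ← Set.ncard_coe_finset]
  congr 1
  ext i
  simp only [Finset.coe_filter, Finset.mem_range, Set.mem_ofPred_eq]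
  exact ⟨fun h => h.2, fun h => ⟨h.lt, h⟩⟩

lemma finite_hillAt (w : List SStep) : {i | IsHillAt w i}.Finite :=
  (Set.finite_lt_nat w.length).subset fun _ h => IsHillAt.lt h

lemma hills_eq_zero_iff (w : List SStep) : hills w = 0 ↔ ∀ i, ¬ IsHillAt w i := by
  rw [hills_eq_ncard, Set.ncard_eq_zero (finite_hillAt w), Set.eq_empty_iff_forall_notMem]
  rfl

/-- A hill of `p ++ q` cannot straddle the junction when `p` is balanced: the last step of `p`
would be a `U` starting at height `0`, so `p` would end at height `1`. -/
lemma isHillAt_append_left {p : List SStep} (hp : p.count SStep.U = p.count SStep.D)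
    (q : List SStep) {i : ℕ} (hi : i < p.length) : IsHillAt (p ++ q) i ↔ IsHillAt p i := by
  rcases Nat.lt_or_ge (i + 1) p.length with h | h
  · simp only [IsHillAt, List.getElem?_append_left hi, List.getElem?_append_left h,
      List.take_append_of_le_length hi.le]
  · have key : p[i]? = some SStep.U →
        (p.take i).count SStep.U ≠ (p.take i).count SStep.D := by
      intro h1 h2
      have e : p = p.take i ++ [SStep.U] := by
        have e1 : p.take (i + 1) = p := List.take_of_length_le h
        rw [List.take_add_one, h1] at e1
        simpa using e1.symm
      rw [e] at hp
      simp [h2] at hp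
    simp only [IsHillAt, List.getElem?_append_left hi, List.take_append_of_le_length hi.le]
    exact ⟨fun h => absurd h.2.2 (key h.1), fun h => absurd h.2.2 (key h.1)⟩

lemma isHillAt_append_right {p : List SStep} (hp : p.count SStep.U = p.count SStep.D)
    (q : List SStep) (i : ℕ) : IsHillAt (p ++ q) (p.length + i) ↔ IsHillAt q i := by
  have h1 : (p ++ q)[p.length + i]? = q[i]? := by
    rw [List.getElem?_append_right (by omega)]; congr 1; omega
  have h2 : (p ++ q)[p.length + i + 1]? = q[i + 1]? := by
    rw [List.getElem?_append_right (by omega)]; congr 1; omega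
  have h3 : (p ++ q).take (p.length + i) = p ++ q.take i := by
    rw [List.take_length_add_append]
  rw [IsHillAt, IsHillAt, h1, h2, h3, List.count_append, List.count_append, hp]
  simp

lemma hills_append {p : List SStep} (hp : p.count SStep.U = p.count SStep.D)
    (q : List SStep) : hills (p ++ q) = hills p + hills q := by
  have e : {i | IsHillAt (p ++ q) i} =
      {i | IsHillAt p i} ∪ (fun i => p.length + i) '' {i | IsHillAt q i} := by
    ext i
    simp only [Set.mem_ofPred_eq, Set.mem_union, Set.mem_image]
    rcases Nat.lt_or_ge i p.length with h | h
    · rw [isHillAt_append_left hp q h]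
      exact ⟨Or.inl, fun h' => h'.resolve_right (by rintro ⟨j, -, hj⟩; omega)⟩
    · obtain ⟨j, rfl⟩ := Nat.exists_eq_add_of_le h
      rw [isHillAt_append_right hp]
      constructor
      · exact fun h' => Or.inr ⟨j, h', rfl⟩
      · rintro (h' | ⟨j', h', hj⟩)
        · exact absurd h'.lt (by omega)
        · rwa [← Nat.add_left_cancel hj]
  rw [hills_eq_ncard, hills_eq_ncard p, hills_eq_ncard q, e,
    Set.ncard_union_eq _ (finite_hillAt p) ((finite_hillAt q).image _),
    Set.ncard_image_of_injective _ (add_right_injective _)]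
  rw [Set.disjoint_left]
  rintro i hi ⟨j, -, hj⟩
  have := IsHillAt.lt hi
  simp only at hj
  omega

lemma hills_UD : hills [SStep.U, SStep.D] = 1 := by
  decide

lemma IsSchroeder.append {a b : ℕ} {p q : List SStep} (hp : IsSchroeder a p)
    (hq : IsSchroeder b q) : IsSchroeder (a + b) (p ++ q) := by
  obtain ⟨p1, p2, p3⟩ := hp
  obtain ⟨q1, q2, q3⟩ := hq
  refine ⟨by simp [p1, q1], by simp only [List.count_append]; omega, fun i => ?_⟩
  rw [List.take_append, List.count_append, List.count_append]
  exact add_le_add (p3 _) (q3 _)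

lemma isSchroeder_UD : IsSchroeder 1 [SStep.U, SStep.D] := by
  refine ⟨by decide, by decide, fun i => ?_⟩
  rcases i with _ | _ | i <;> simp

/-- A prefix of a path that returns to height `0` is a path. -/
lemma IsSchroeder.left_factor {n : ℕ} {p q : List SStep} (h : IsSchroeder n (p ++ q))
    (hp : p.count SStep.U = p.count SStep.D) :
    IsSchroeder (p.count SStep.U + p.count SStep.H) p := by
  refine ⟨hp, rfl, fun i => ?_⟩
  have := h.2.2 (min i p.length)
  rwa [List.take_append_of_le_length (min_le_right _ _), ← List.take_eq_take_min] at this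

/-- What remains of a path after a return to height `0` is a path. -/
lemma IsSchroeder.right_factor {n : ℕ} {p q : List SStep} (h : IsSchroeder n (p ++ q))
    (hp : p.count SStep.U = p.count SStep.D) :
    IsSchroeder (q.count SStep.U + q.count SStep.H) q := by
  refine ⟨?_, rfl, fun i => ?_⟩
  · have := h.1
    simp only [List.count_append] at this
    omega
  · have := h.2.2 (p.length + i)
    rw [List.take_length_add_append] at this
    simp only [List.count_append] at this
    omega

/-- Splitting a path at its leftmost hill. -/
lemma exists_first_hill {n : ℕ} {w : List SStep} (hw : IsSchroeder n w) (h : hills w ≠ 0) :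
    ∃ a b p q, IsSchroeder a p ∧ hills p = 0 ∧ IsSchroeder b q ∧
      w = p ++ ([SStep.U, SStep.D] ++ q) ∧ n = a + b + 1 := by
  classical
  have hex : ∃ i, IsHillAt w i := by
    by_contra hc
    exact h ((hills_eq_zero_iff w).2 (not_exists.1 hc))
  obtain ⟨h1, h2, h3⟩ := Nat.find_spec hex
  have hmin := fun j => Nat.find_min hex (m := j)
  generalize Nat.find hex = i at h1 h2 h3 hmin
  obtain ⟨hi, h1'⟩ := List.getElem?_eq_some_iff.1 h1
  obtain ⟨hi2, h2'⟩ := List.getElem?_eq_some_iff.1 h2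
  have e : w = w.take i ++ ([SStep.U, SStep.D] ++ w.drop (i + 2)) := by
    conv_lhs => rw [← List.take_append_drop i w, List.drop_eq_getElem_cons hi,
      List.drop_eq_getElem_cons hi2, h1', h2']
    rfl
  have hlen : (w.take i).length = i := by simp; omega
  generalize w.take i = p at *
  generalize w.drop (i + 2) = q at *
  subst e
  have hq := hw.right_factor h3
  refine ⟨_, _, p, q, hw.left_factor h3, ?_, IsSchroeder.right_factor hq (by decide), rfl, ?_⟩
  · rw [hills_eq_zero_iff]
    intro j hj
    have hjl := hj.lt
    exact hmin j (by omega) ((isHillAt_append_left h3 _ hjl).2 hj)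
  · rw [← hw.2.1]
    simp [List.count_append]
    omega

/-- The hill after `p` would lie inside `p'` if `p` were shorter. Used in both directions, this
shows that the hill-free part before the first hill is determined by the word. -/
lemma length_le_of_first_hill {p q p' q' : List SStep}
    (hp : p.count SStep.U = p.count SStep.D)
    (hp' : p'.count SStep.U = p'.count SStep.D) (h' : hills p' = 0)
    (e : p ++ ([SStep.U, SStep.D] ++ q) = p' ++ ([SStep.U, SStep.D] ++ q')) :
    p'.length ≤ p.length := by
  by_contra! hlt
  have hh : IsHillAt (p ++ ([SStep.U, SStep.D] ++ q)) (p.length + 0) :=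
    (isHillAt_append_right hp _ 0).2 (by simp [IsHillAt])
  rw [e, add_zero, isHillAt_append_left hp' _ hlt] at hh
  exact (hills_eq_zero_iff p').1 h' _ hh

lemma length_eq_counts (w : List SStep) :
    w.length = w.count SStep.U + w.count SStep.D + w.count SStep.H := by
  induction w with
  | nil => rfl
  | cons x w ih => cases x <;> simp [ih] <;> omega

instance finite_paths (n k : ℕ) : Finite {w : List SStep // IsSchroeder n w ∧ hills w = k} := by
  have : Finite SStep := by
    refine Finite.of_surjective (fun i : Fin 3 => ![SStep.U, SStep.D, SStep.H] i) ?_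
    rintro (_ | _ | _)
    exacts [⟨0, rfl⟩, ⟨1, rfl⟩, ⟨2, rfl⟩]
  refine ((List.finite_length_le SStep (2 * n)).subset ?_).to_subtype
  rintro w ⟨⟨h1, h2, -⟩, -⟩
  have := length_eq_counts w
  simp only [Set.mem_ofPred_eq]
  omega

/-- The convolution recurrence obtained by cutting out the leftmost hill. -/
lemma r_succ_succ (n k : ℕ) :
    r (n + 1) (k + 1) = ∑ x ∈ Finset.HasAntidiagonal.antidiagonal n, r x.1 0 * r x.2 k := by
  rw [← Finset.sum_coe_sort]
  simp only [r, ← Nat.card_prod]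
  rw [← Nat.card_sigma]
  symm
  refine Nat.card_congr (Equiv.ofBijective (fun z =>
    ⟨z.2.1.1 ++ ([SStep.U, SStep.D] ++ z.2.2.1), ?_, ?_⟩) ⟨?_, ?_⟩)
  · have h := z.2.1.2.1.append (isSchroeder_UD.append z.2.2.2.1)
    have hz := Finset.HasAntidiagonal.mem_antidiagonal.1 z.1.2
    convert h using 1
    omega
  · rw [hills_append z.2.1.2.1.1, hills_append (by decide), hills_UD, z.2.1.2.2, z.2.2.2.2]
    omega
  · rintro ⟨⟨⟨a, b⟩, hab⟩, ⟨p, hp, hp0⟩, ⟨q, hq, hqk⟩⟩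
      ⟨⟨⟨a', b'⟩, hab'⟩, ⟨p', hp', hp0'⟩, ⟨q', hq', hqk'⟩⟩ e
    have e' : p ++ ([SStep.U, SStep.D] ++ q) = p' ++ ([SStep.U, SStep.D] ++ q') :=
      congrArg Subtype.val e
    have hl : p.length = p'.length := le_antisymm
      (length_le_of_first_hill hp'.1 hp.1 hp0 e'.symm)
      (length_le_of_first_hill hp.1 hp'.1 hp0' e')
    obtain ⟨rfl, e2⟩ := List.append_inj e' hl
    obtain rfl := List.append_cancel_left e2
    obtain rfl : a = a' := hp.2.1.symm.trans hp'.2.1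
    obtain rfl : b = b' := hq.2.1.symm.trans hq'.2.1
    rfl
  · rintro ⟨w, hw, hk⟩
    obtain ⟨a, b, p, q, hp, hp0, hq, rfl, hn⟩ := exists_first_hill hw (by omega)
    rw [hills_append hp.1, hills_append (by decide), hills_UD] at hk
    exact ⟨⟨⟨(a, b), Finset.HasAntidiagonal.mem_antidiagonal.2 (by simp only; omega)⟩, ⟨p, hp, hp0⟩,
      ⟨q, hq, by omega⟩⟩, rfl⟩

lemma r_eq_zero_of_lt {n k : ℕ} (h : n < k) : r n k = 0 := by
  induction k generalizing n with
  | zero => omega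
  | succ k ih =>
    rcases n with _ | n
    · rw [r, Nat.card_eq_zero]
      refine Or.inl ⟨?_⟩
      rintro ⟨w, hw, hk⟩
      obtain ⟨a, b, p, q, -, -, -, -, hn⟩ := exists_first_hill hw (by omega)
      omega
    · rw [r_succ_succ]
      refine Finset.sum_eq_zero fun x hx => ?_
      have := Finset.HasAntidiagonal.mem_antidiagonal.1 hx
      rw [ih (by omega), mul_zero]

lemma sum_antidiagonalTuple_succ (k m : ℕ) (f : ℕ → ℕ) :
    ∑ t ∈ Finset.Nat.antidiagonalTuple (k + 1) m, ∏ i, f (t i) =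
      ∑ x ∈ Finset.HasAntidiagonal.antidiagonal m, f x.1 *
        ∑ t ∈ Finset.Nat.antidiagonalTuple k x.2, ∏ i, f (t i) := by
  simp only [Finset.mul_sum]
  rw [Finset.sum_sigma']
  symm
  refine Finset.sum_bij' (fun z _ => Fin.cons z.1.1 z.2)
    (fun t _ => ⟨(t 0, ∑ i, Fin.tail t i), Fin.tail t⟩) ?_ ?_ ?_ ?_ ?_
  · rintro ⟨⟨a, b⟩, t⟩ h
    simp only [Finset.mem_sigma, Finset.HasAntidiagonal.mem_antidiagonal, Finset.Nat.mem_antidiagonalTuple] at h ⊢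
    rw [Fin.sum_cons, h.2, h.1]
  · intro t h
    simp only [Finset.mem_sigma, Finset.HasAntidiagonal.mem_antidiagonal, Finset.Nat.mem_antidiagonalTuple] at h ⊢
    rw [Fin.sum_univ_succ] at h
    exact ⟨h, trivial⟩
  · rintro ⟨⟨a, b⟩, t⟩ h
    simp only [Finset.mem_sigma, Finset.HasAntidiagonal.mem_antidiagonal, Finset.Nat.mem_antidiagonalTuple] at h
    obtain ⟨-, rfl⟩ := h
    simp
  · intro t _
    exact Fin.cons_self_tail t
  · rintro ⟨⟨a, b⟩, t⟩ _
    simp [Fin.prod_univ_succ]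

/-- Only the terms of `r_succ_succ` whose second index is at least `k` survive. -/
lemma r_add_succ (m k : ℕ) :
    r (m + (k + 1)) (k + 1) = ∑ x ∈ Finset.HasAntidiagonal.antidiagonal m, r x.1 0 * r (x.2 + k) k := by
  rw [← add_assoc, r_succ_succ]
  symm
  refine Finset.sum_of_injOn (fun x => (x.1, x.2 + k)) ?_ ?_ ?_ ?_
  · rintro ⟨a, b⟩ _ ⟨c, d⟩ _ h
    simpa using h
  · rintro ⟨a, b⟩ h
    simp only [Finset.mem_coe, Finset.HasAntidiagonal.mem_antidiagonal] at h ⊢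
    omega
  · rintro ⟨a, b⟩ h h'
    have hb : b < k := by
      by_contra! hb
      rw [Finset.HasAntidiagonal.mem_antidiagonal] at h
      obtain ⟨c, rfl⟩ := Nat.exists_eq_add_of_le' hb
      refine h' ⟨(a, c), ?_, rfl⟩
      simp only [Finset.mem_coe, Finset.HasAntidiagonal.mem_antidiagonal] at h ⊢
      omega
    rw [r_eq_zero_of_lt (n := (a, b).2) hb, mul_zero]
  · intros; rfl

lemma r_add (m k : ℕ) :
    r (m + k) k = ∑ t ∈ Finset.Nat.antidiagonalTuple (k + 1) m, ∏ i, r (t i) 0 := by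
  induction k generalizing m with
  | zero => simp [Finset.Nat.antidiagonalTuple_one]
  | succ k ih =>
    rw [r_add_succ, sum_antidiagonalTuple_succ (k + 1) m fun j => r j 0]
    exact Finset.sum_congr rfl fun x _ => by rw [ih]

/-- For all `0 ≤ k ≤ n`, `r(n,k)` is the sum, over all `(k+1)`-tuples of
nonnegative integers summing to `n - k`, of the products `Π_i r(n_i, 0)`. -/
theorem stmt5 (n k : ℕ) (hkn : k ≤ n) :
    r n k = ∑ t ∈ Finset.Nat.antidiagonalTuple (k + 1) (n - k), ∏ i, r (t i) 0 := by
  rw [← r_add, Nat.sub_add_cancel hkn]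
end

section
/- For every integer n ≥ 2, p(n,1) = Σ_{j=1}^{n-1} 2^{j-1} · p(n-1,j). -/
/-!
Weight a separable permutation `π` by `w ^ (iar π - 1)` and let `A_w(x)` be the generating
function of all separable permutations, the empty one included; `A_1` just counts them.

* A nonempty separable permutation is uniquely a skew sum `α ⊖ β` with `α` skew-indecomposable,
  and `iar (α ⊖ β) = iar α`. So `A_w = 1 + J_w A_1`, where `J_w` counts the skew-indecomposables.
* It is also uniquely a direct sum `α ⊕ β` with `α` sum-indecomposable. If `α` is a point then
  `iar (α ⊕ β) = 1 + iar β`; otherwise `α` is not increasing and `iar (α ⊕ β) = iar α`. So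
  `A_w = 1 + x (1 + w (A_w - 1)) + I_w A_1`, where `I_w` counts the sum-indecomposables of size
  at least two.
* A separable permutation of size at least two is either a direct sum or a skew sum, and not
  both (`splits_of_avoids`, `sumInd_xor`). So `I_w + J_w = A_w - 1`.

Eliminating `I_w` and `J_w` gives `(A_w - 1)(2 - A_1) = x (1 + w (A_w - 1))`
(`genAll_functional`). The cases `w = 0, 1, 2` together yield `A_0 - 1 = x A_2`
(`genAll_zero_eq`). Since `0 ^ (iar π - 1)` detects `iar π = 1`, the coefficient of `x ^ n` in
this identity is the claim.

Skew sums are handled throughout as complements of direct sums.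
-/

/-- The pattern `2413` as a permutation of `Fin 4` (zero-indexed values `1,3,0,2`). -/
def pattern2413 : Equiv.Perm (Fin 4) :=
  ⟨![1, 3, 0, 2], ![2, 0, 3, 1], by decide, by decide⟩

/-- The pattern `3142` as a permutation of `Fin 4` (zero-indexed values `2,0,3,1`). -/
def pattern3142 : Equiv.Perm (Fin 4) :=
  ⟨![2, 0, 3, 1], ![1, 3, 0, 2], by decide, by decide⟩

/-- `ContainsPat π σ` : the permutation `π` contains the pattern `σ`. -/
def ContainsPat {n m : ℕ} (π : Equiv.Perm (Fin n)) (σ : Equiv.Perm (Fin m)) : Prop :=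
  ∃ f : Fin m ↪o Fin n, ∀ a b : Fin m, σ a < σ b ↔ π (f a) < π (f b)

/-- A separable permutation avoids both `2413` and `3142`. -/
def Separable {n : ℕ} (π : Equiv.Perm (Fin n)) : Prop :=
  ¬ ContainsPat π pattern2413 ∧ ¬ ContainsPat π pattern3142

/-- `iar π` : the length of the initial ascending run of `π`, i.e. the largest
`k ≤ n` such that the first `k` values of `π` are increasing. -/
def iar {n : ℕ} (π : Equiv.Perm (Fin n)) : ℕ :=
  Nat.findGreatest (fun k => ∀ i j : Fin n, (i : ℕ) < (j : ℕ) → (j : ℕ) < k → π i < π j) n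

/-- `p n k` : the number of separable permutations of `[n]` with `iar` equal to `k`. -/
noncomputable def p (n k : ℕ) : ℕ :=
  Nat.card {π : Equiv.Perm (Fin n) // Separable π ∧ iar π = k}

/-- `compStat π` : the number of indices `k ∈ {1,…,n}` such that the first `k`
values of `π` are exactly `{1,…,k}`. -/
def compStat {n : ℕ} (π : Equiv.Perm (Fin n)) : ℕ :=
  ((Finset.Icc 1 n).filter
    (fun k => ∀ i : Fin n, (i : ℕ) < k → (π i : ℕ) < k)).card

/-! ### Pattern avoidance -/

/-- `f` takes no four values on `S` in the relative order `2413` or `3142`. -/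
def AvoidsOn {ι : Type*} [LinearOrder ι] (S : Finset ι) (f : ι → ℤ) : Prop :=
  ∀ a ∈ S, ∀ b ∈ S, ∀ c ∈ S, ∀ d ∈ S, a < b → b < c → c < d →
    ¬ (f c < f a ∧ f a < f d ∧ f d < f b) ∧ ¬ (f b < f d ∧ f d < f a ∧ f a < f c)

theorem AvoidsOn.neg {ι : Type*} [LinearOrder ι] {S : Finset ι} {f : ι → ℤ}
    (h : AvoidsOn S f) : AvoidsOn S (fun i => - f i) := by
  intro a ha b hb c hc d hd h1 h2 h3
  have := h a ha b hb c hc d hd h1 h2 h3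
  constructor
  · rintro ⟨x, y, z⟩
    exact this.2 ⟨by linarith, by linarith, by linarith⟩
  · rintro ⟨x, y, z⟩
    exact this.1 ⟨by linarith, by linarith, by linarith⟩

theorem AvoidsOn.mono {ι : Type*} [LinearOrder ι] {S T : Finset ι} {f : ι → ℤ}
    (h : AvoidsOn S f) (hT : T ⊆ S) : AvoidsOn T f :=
  fun a ha b hb c hc d hd => h a (hT ha) b (hT hb) c (hT hc) d (hT hd)

/-- The elements of `S` before `c` take smaller values than those from `c` on. -/
def SumCut {ι : Type*} [LinearOrder ι] (S : Finset ι) (f : ι → ℤ) (c : ι) : Prop :=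
  ∀ a ∈ S, ∀ b ∈ S, a < c → c ≤ b → f a < f b

/-- `S` splits at one of its non-minimal points, as a direct sum or as a skew sum. -/
def IsSplit {ι : Type*} [LinearOrder ι] (S : Finset ι) (f : ι → ℤ) : Prop :=
  ∃ c ∈ S, (∃ a ∈ S, a < c) ∧ (SumCut S f c ∨ SumCut S (fun i => - f i) c)

/-- The inductive step of `splits_of_avoids`: `v` is the first point, and the remaining
points `T` form a direct sum. -/
theorem splits_step {ι : Type*} [LinearOrder ι] (S T : Finset ι) (f : ι → ℤ) (v : ι)
    (hST : S = insert v T) (hv : ∀ t ∈ T, v < t) (hinj : Set.InjOn f S) (hav : AvoidsOn S f)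
    (ih : ∀ U : Finset ι, U ⊆ T → 2 ≤ U.card → IsSplit U f)
    (hT : ∃ c ∈ T, (∃ a ∈ T, a < c) ∧ SumCut T f c) : IsSplit S f := by
  classical
  have hvS : v ∈ S := by simp [hST]
  have hTS : ∀ t ∈ T, t ∈ S := fun t ht => by simp [hST, ht]
  have hne : (T.filter (fun c => (∃ a ∈ T, a < c) ∧ SumCut T f c)).Nonempty := by
    obtain ⟨c, hc, h⟩ := hT
    exact ⟨c, Finset.mem_filter.2 ⟨hc, h⟩⟩
  -- the last cut, so that the part of `T` from `c` on is sum-indecomposable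
  obtain ⟨c, hcmem, hmax⟩ := Finset.exists_maximal hne
  obtain ⟨hc, ⟨a0, ha0, ha0c⟩, hcut⟩ := Finset.mem_filter.1 hcmem
  by_cases h1 : ∀ b ∈ T, c ≤ b → f v < f b
  · refine ⟨c, hTS c hc, ⟨v, hvS, hv c hc⟩, Or.inl ?_⟩
    intro a ha b hb hac hcb
    have hbT : b ∈ T := by
      rw [hST, Finset.mem_insert] at hb
      rcases hb with rfl | hb
      · exact absurd (hv c hc) (not_lt.2 hcb)
      · exact hb
    rw [hST, Finset.mem_insert] at ha
    rcases ha with rfl | ha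
    · exact h1 b hbT hcb
    · exact hcut a ha b hbT hac hcb
  by_cases h2 : ∀ t ∈ T, f t < f v
  · have hTne : T.Nonempty := ⟨c, hc⟩
    refine ⟨T.min' hTne, hTS _ (T.min'_mem hTne), ⟨v, hvS, hv _ (T.min'_mem hTne)⟩, Or.inr ?_⟩
    intro a ha b hb hac hcb
    have hbT : b ∈ T := by
      rw [hST, Finset.mem_insert] at hb
      rcases hb with rfl | hb
      · exact absurd (hv _ (T.min'_mem hTne)) (not_lt.2 hcb)
      · exact hb
    rw [hST, Finset.mem_insert] at ha
    rcases ha with rfl | ha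
    · simpa using h2 b hbT
    · exact absurd (T.min'_le a ha) (not_le.2 hac)
  exfalso
  push Not at h1 h2
  obtain ⟨x0, hx0, hcx0, hx0v⟩ := h1
  obtain ⟨y0, hy0, hy0v⟩ := h2
  have hx0v' : f x0 < f v := lt_of_le_of_ne hx0v fun e =>
    (hv x0 hx0).ne' (hinj (hTS _ hx0) hvS e)
  have hy0v' : f v < f y0 := lt_of_le_of_ne hy0v fun e =>
    (hv y0 hy0).ne (hinj hvS (hTS _ hy0) e)
  have hcy0 : c ≤ y0 := by
    by_contra h
    have := hcut y0 hy0 x0 hx0 (not_le.1 h) hcx0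
    linarith
  set U := T.filter (fun t => c ≤ t) with hU
  have hUmem : ∀ t, t ∈ U ↔ t ∈ T ∧ c ≤ t := fun t => by simp [hU]
  have hUcard : 2 ≤ U.card := by
    apply Finset.one_lt_card.2
    exact ⟨x0, (hUmem _).2 ⟨hx0, hcx0⟩, y0, (hUmem _).2 ⟨hy0, hcy0⟩, fun e => by
      rw [e] at hx0v'; linarith⟩
  obtain ⟨d, hd, ⟨e, he, hed⟩, hs | hs⟩ := ih U (Finset.filter_subset _ _) hUcard
  · have hcd : c < d := lt_of_le_of_lt ((hUmem e).1 he).2 hed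
    have hdmem : d ∈ T.filter (fun c => (∃ a ∈ T, a < c) ∧ SumCut T f c) := by
      refine Finset.mem_filter.2 ⟨((hUmem d).1 hd).1, ⟨e, ((hUmem e).1 he).1, hed⟩, ?_⟩
      intro a ha b hb had hdb
      rcases lt_or_ge a c with hac | hac
      · exact hcut a ha b hb hac (hcd.le.trans hdb)
      · exact hs a ((hUmem a).2 ⟨ha, hac⟩) b ((hUmem b).2 ⟨hb, hcd.le.trans hdb⟩) had hdb
    exact absurd (hmax hdmem hcd.le) (not_le.2 hcd)
  · obtain ⟨y, hy, hyd, hyv⟩ : ∃ y ∈ U, y < d ∧ f v < f y := by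
      rcases lt_or_ge y0 d with h | h
      · exact ⟨y0, (hUmem _).2 ⟨hy0, hcy0⟩, h, hy0v'⟩
      · have := hs e he y0 ((hUmem _).2 ⟨hy0, hcy0⟩) hed h
        exact ⟨e, he, hed, by linarith⟩
    obtain ⟨x, hx, hdx, hxv⟩ : ∃ x ∈ U, d ≤ x ∧ f x < f v := by
      rcases lt_or_ge x0 d with h | h
      · have := hs x0 ((hUmem _).2 ⟨hx0, hcx0⟩) d hd h le_rfl
        exact ⟨d, hd, le_rfl, by linarith⟩
      · exact ⟨x0, (hUmem _).2 ⟨hx0, hcx0⟩, h, hx0v'⟩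
    rw [hUmem] at hx hy
    -- `v, a0, y, x` is an occurrence of `3142`
    exact (hav v hvS a0 (hTS _ ha0) y (hTS _ hy.1) x (hTS _ hx.1) (hv _ ha0)
      (ha0c.trans_le hy.2) (hyd.trans_le hdx)).2
      ⟨hcut a0 ha0 x hx.1 ha0c hx.2, hxv, hyv⟩

/-- The structure theorem: an injective sequence of length at least two that avoids `2413`
and `3142` is a direct sum or a skew sum of two nonempty sequences. -/
theorem splits_of_avoids {ι : Type*} [LinearOrder ι] (N : ℕ) :
    ∀ (S : Finset ι) (f : ι → ℤ), S.card ≤ N → 2 ≤ S.card → Set.InjOn f S → AvoidsOn S f →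
      IsSplit S f := by
  classical
  induction N with
  | zero => intro S f h1 h2; omega
  | succ N ih =>
    intro S f hN h2 hinj hav
    have hSne : S.Nonempty := Finset.card_pos.1 (by omega)
    set v := S.min' hSne with hvdef
    have hvS : v ∈ S := S.min'_mem hSne
    set T := S.erase v with hTdef
    have hST : S = insert v T := (Finset.insert_erase hvS).symm
    have hTS : T ⊆ S := Finset.erase_subset _ _
    have hv : ∀ t ∈ T, v < t := fun t ht =>
      lt_of_le_of_ne (S.min'_le t (hTS ht)) (Finset.ne_of_mem_erase ht).symm
    have hTc : T.card + 1 = S.card := Finset.card_erase_add_one hvS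
    rcases Nat.lt_or_ge T.card 2 with h | h
    · obtain ⟨u, hu⟩ := Finset.card_eq_one.1 (show T.card = 1 by omega)
      have huT : u ∈ T := by simp [hu]
      have hvu := hv u huT
      refine ⟨u, hTS huT, ⟨v, hvS, hvu⟩, ?_⟩
      have key : ∀ a ∈ S, ∀ b ∈ S, a < u → u ≤ b → a = v ∧ b = u := by
        intro a ha b hb hau hub
        rw [hST, hu] at ha hb
        simp only [Finset.mem_insert, Finset.mem_singleton] at ha hb
        constructor
        · rcases ha with rfl | rfl
          · rfl
          · exact absurd hau (lt_irrefl _)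
        · rcases hb with rfl | rfl
          · exact absurd hub (not_le.2 hvu)
          · rfl
      rcases lt_or_gt_of_ne (fun e => hvu.ne (hinj hvS (hTS huT) e) : f v ≠ f u) with hlt | hlt
      · left
        intro a ha b hb hau hub
        obtain ⟨rfl, rfl⟩ := key a ha b hb hau hub
        exact hlt
      · right
        intro a ha b hb hau hub
        obtain ⟨rfl, rfl⟩ := key a ha b hb hau hub
        simpa using hlt
    · have hinjn : Set.InjOn (fun i => - f i) S := fun a ha b hb e => hinj ha hb (by simpa using e)
      obtain ⟨c, hc, hac, hs | hs⟩ := ih T f (by omega) h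
        (hinj.mono (by exact_mod_cast hTS)) (hav.mono hTS)
      · exact splits_step S T f v hST hv hinj hav
          (fun U hU hU2 => ih U f (by have := Finset.card_le_card hU; omega) hU2
            (hinj.mono (by exact_mod_cast hU.trans hTS)) (hav.mono (hU.trans hTS)))
          ⟨c, hc, hac, hs⟩
      · obtain ⟨c, hc, hac, hs⟩ := splits_step S T (fun i => - f i) v hST hv hinjn hav.neg
          (fun U hU hU2 => ih U _ (by have := Finset.card_le_card hU; omega) hU2
            (hinjn.mono (by exact_mod_cast hU.trans hTS)) (hav.neg.mono (hU.trans hTS)))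
          ⟨c, hc, hac, hs⟩
        exact ⟨c, hc, hac, by simpa using hs.symm⟩

theorem separable_iff {n : ℕ} (π : Equiv.Perm (Fin n)) : Separable π ↔
    ∀ a b c d : Fin n, a < b → b < c → c < d →
      ¬ (π c < π a ∧ π a < π d ∧ π d < π b) ∧ ¬ (π b < π d ∧ π d < π a ∧ π a < π c) := by
  constructor
  · rintro ⟨h1, h2⟩ a b c d hab hbc hcd
    have hmono : StrictMono ![a, b, c, d] := by
      refine Fin.strictMono_iff_lt_succ.2 fun i => ?_
      fin_cases i
      exacts [hab, hbc, hcd]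
    refine ⟨fun ⟨x, y, z⟩ => h1 ⟨OrderEmbedding.ofStrictMono _ hmono, fun i j => ?_⟩,
      fun ⟨x, y, z⟩ => h2 ⟨OrderEmbedding.ofStrictMono _ hmono, fun i j => ?_⟩⟩
    · fin_cases i <;> fin_cases j <;> simp [pattern2413] <;> order
    · fin_cases i <;> fin_cases j <;> simp [pattern3142] <;> order
  · intro h
    constructor
    · rintro ⟨f, hf⟩
      refine (h (f 0) (f 1) (f 2) (f 3) (by simp) (by simp) (by simp)).1
        ⟨(hf _ _).1 (by decide), (hf _ _).1 (by decide), (hf _ _).1 (by decide)⟩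
    · rintro ⟨f, hf⟩
      refine (h (f 0) (f 1) (f 2) (f 3) (by simp) (by simp) (by simp)).2
        ⟨(hf _ _).1 (by decide), (hf _ _).1 (by decide), (hf _ _).1 (by decide)⟩

/-! ### Complements and direct sums of permutations -/

/-- The complement of a permutation, `i ↦ n + 1 - π i` in one-indexed notation. -/
def permCompl {n : ℕ} (π : Equiv.Perm (Fin n)) : Equiv.Perm (Fin n) := π.trans Fin.revPerm

theorem permCompl_lt {n : ℕ} (π : Equiv.Perm (Fin n)) (i j : Fin n) :
    permCompl π i < permCompl π j ↔ π j < π i := by simp [permCompl]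

theorem permCompl_permCompl {n : ℕ} (π : Equiv.Perm (Fin n)) : permCompl (permCompl π) = π := by
  ext i; simp [permCompl]

/-- Complementation as an involutive equivalence, for reindexing sums. -/
def permComplEquiv (n : ℕ) : Equiv.Perm (Fin n) ≃ Equiv.Perm (Fin n) :=
  ⟨permCompl, permCompl, permCompl_permCompl, permCompl_permCompl⟩

theorem sum_permCompl {n : ℕ} (F : Equiv.Perm (Fin n) → ℤ) : ∑ π, F (permCompl π) = ∑ π, F π :=
  Equiv.sum_comp (permComplEquiv n) F

theorem separable_permCompl {n : ℕ} (π : Equiv.Perm (Fin n)) :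
    Separable (permCompl π) ↔ Separable π := by
  simp only [separable_iff, permCompl_lt]
  constructor <;> intro h a b c d h1 h2 h3 <;> have := h a b c d h1 h2 h3 <;> tauto

@[simp] theorem castAdd_lt_castAdd' {m k : ℕ} (i j : Fin m) :
    Fin.castAdd k i < Fin.castAdd k j ↔ i < j := Iff.rfl

/-- The direct sum `α ⊕ β`. -/
def dsum {m k : ℕ} (α : Equiv.Perm (Fin m)) (β : Equiv.Perm (Fin k)) :
    Equiv.Perm (Fin (m + k)) :=
  finSumFinEquiv.permCongr (Equiv.Perm.sumCongr α β)

@[simp] theorem dsum_castAdd {m k : ℕ} (α : Equiv.Perm (Fin m)) (β : Equiv.Perm (Fin k))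
    (i : Fin m) : dsum α β (Fin.castAdd k i) = Fin.castAdd k (α i) := by
  simp [dsum, Equiv.permCongr_apply]

@[simp] theorem dsum_natAdd {m k : ℕ} (α : Equiv.Perm (Fin m)) (β : Equiv.Perm (Fin k))
    (i : Fin k) : dsum α β (Fin.natAdd m i) = Fin.natAdd m (β i) := by
  simp [dsum, Equiv.permCongr_apply]

theorem dsum_injective {m k : ℕ} :
    Function.Injective (fun x : Equiv.Perm (Fin m) × Equiv.Perm (Fin k) => dsum x.1 x.2) := by
  rintro ⟨α, β⟩ ⟨α', β'⟩ h
  simp only at h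
  refine Prod.ext (Equiv.ext fun i => ?_) (Equiv.ext fun i => ?_)
  · have := congrArg (fun π : Equiv.Perm (Fin (m + k)) => π (Fin.castAdd k i)) h
    simpa using this
  · have := congrArg (fun π : Equiv.Perm (Fin (m + k)) => π (Fin.natAdd m i)) h
    simpa using this

/-- Positions before `c` carry smaller values than positions from `c` on. -/
def Cut {n : ℕ} (π : Equiv.Perm (Fin n)) (c : ℕ) : Prop :=
  ∀ a b : Fin n, (a : ℕ) < c → c ≤ (b : ℕ) → π a < π b

/-- `π` is not a direct sum of two nonempty permutations. -/
def SumInd {n : ℕ} (π : Equiv.Perm (Fin n)) : Prop :=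
  ∀ c, 1 ≤ c → c < n → ¬ Cut π c

/-- The first component of `π` in its decomposition as a direct sum has size `c`. -/
def FirstCut {n : ℕ} (π : Equiv.Perm (Fin n)) (c : ℕ) : Prop :=
  1 ≤ c ∧ Cut π c ∧ ∀ c', 1 ≤ c' → c' < c → ¬ Cut π c'

theorem cut_dsum {m k : ℕ} (α : Equiv.Perm (Fin m)) (β : Equiv.Perm (Fin k)) :
    Cut (dsum α β) m := by
  intro a b
  refine Fin.addCases (fun a => ?_) (fun a => ?_) a <;>
    refine Fin.addCases (fun b => ?_) (fun b => ?_) b <;> intro h1 h2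
  · simp at h2; omega
  · simp only [dsum_castAdd, dsum_natAdd, Fin.lt_def, Fin.val_castAdd, Fin.val_natAdd]; omega
  · simp at h1
  · simp at h1

theorem cut_dsum_iff {m k c : ℕ} (α : Equiv.Perm (Fin m)) (β : Equiv.Perm (Fin k))
    (hc : c ≤ m) : Cut (dsum α β) c ↔ Cut α c := by
  constructor
  · intro h a b h1 h2
    have := h (Fin.castAdd k a) (Fin.castAdd k b) (by simpa using h1) (by simpa using h2)
    simpa using this
  · intro h a b
    refine Fin.addCases (fun a => ?_) (fun a => ?_) a <;>
      refine Fin.addCases (fun b => ?_) (fun b => ?_) b <;> intro h1 h2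
    · simpa using h a b (by simpa using h1) (by simpa using h2)
    · exact cut_dsum α β _ _ (by simp) (by simp)
    · simp at h1; omega
    · simp at h1; omega

theorem firstCut_dsum {m k : ℕ} (hm : 1 ≤ m) (α : Equiv.Perm (Fin m)) (β : Equiv.Perm (Fin k)) :
    FirstCut (dsum α β) m ↔ SumInd α := by
  constructor
  · intro h c h1 h2 h3
    exact h.2.2 c h1 h2 ((cut_dsum_iff α β h2.le).2 h3)
  · intro h
    exact ⟨hm, cut_dsum α β, fun c h1 h2 h3 => h c h1 h2 ((cut_dsum_iff α β h2.le).1 h3)⟩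

/-- A permutation with a cut at `m` is a direct sum. -/
theorem exists_dsum {m k : ℕ} (π : Equiv.Perm (Fin (m + k))) (h : Cut π m) :
    ∃ α β, dsum α β = π := by
  -- the `k` values at positions `≥ m` all exceed the value at any position `< m`
  have key : ∀ i : Fin m, (π (Fin.castAdd k i) : ℕ) < m := by
    intro i
    have hc : (Finset.univ.image (fun j : Fin k => π (Fin.natAdd m j))).card ≤
        (Finset.Ioi (π (Fin.castAdd k i))).card := by
      apply Finset.card_le_card
      intro x hx
      obtain ⟨j, -, rfl⟩ := Finset.mem_image.1 hx
      exact Finset.mem_Ioi.2 (h _ _ (by simp) (by simp))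
    rw [Finset.card_image_of_injective _ (fun a b e => by simpa using e), Fin.card_Ioi] at hc
    simp at hc
    omega
  have hmaps : Set.MapsTo (finSumFinEquiv.symm.permCongr π)
      (Set.range (Sum.inl : Fin m → Fin m ⊕ Fin k)) (Set.range Sum.inl) := by
    rintro _ ⟨i, rfl⟩
    refine ⟨⟨_, key i⟩, ?_⟩
    apply finSumFinEquiv.injective
    simp [Equiv.permCongr_apply]
  obtain ⟨⟨α, β⟩, hαβ⟩ := Equiv.Perm.mem_sumCongrHom_range_of_perm_mapsTo_inl hmaps
  refine ⟨α, β, ?_⟩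
  have : Equiv.Perm.sumCongr α β = finSumFinEquiv.symm.permCongr π := hαβ
  rw [dsum, this]
  ext i
  simp [Equiv.permCongr_apply]

theorem separable_dsum {m k : ℕ} (α : Equiv.Perm (Fin m)) (β : Equiv.Perm (Fin k)) :
    Separable (dsum α β) ↔ Separable α ∧ Separable β := by
  simp only [separable_iff]
  constructor
  · intro h
    constructor
    · intro a b c d h1 h2 h3
      simpa using h (Fin.castAdd k a) (Fin.castAdd k b) (Fin.castAdd k c) (Fin.castAdd k d)
        (by simpa using h1) (by simpa using h2) (by simpa using h3)
    · intro a b c d h1 h2 h3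
      simpa using h (Fin.natAdd m a) (Fin.natAdd m b) (Fin.natAdd m c) (Fin.natAdd m d)
        (by simpa using h1) (by simpa using h2) (by simpa using h3)
  · rintro ⟨hα, hβ⟩ a b c d
    refine Fin.addCases (fun a => ?_) (fun a => ?_) a <;>
    refine Fin.addCases (fun b => ?_) (fun b => ?_) b <;>
    refine Fin.addCases (fun c => ?_) (fun c => ?_) c <;>
    refine Fin.addCases (fun d => ?_) (fun d => ?_) d <;>
    intro h1 h2 h3
    case refine_1.refine_1.refine_1.refine_1 =>
      simpa using hα a b c d (by simpa using h1) (by simpa using h2) (by simpa using h3)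
    case refine_2.refine_2.refine_2.refine_2 =>
      simpa using hβ a b c d (by simpa using h1) (by simpa using h2) (by simpa using h3)
    all_goals
      simp only [dsum_castAdd, dsum_natAdd, Fin.lt_def, Fin.val_castAdd, Fin.val_natAdd]
        at h1 h2 h3 ⊢
      omega

/-- Every permutation has a unique first component; splitting it off turns a sum over
permutations into a convolution. -/
theorem sum_firstCut (F : ∀ n, Equiv.Perm (Fin n) → ℤ) (n : ℕ) (hn : 1 ≤ n) :
    ∑ π, F n π = ∑ x ∈ Finset.HasAntidiagonal.antidiagonal n, if 1 ≤ x.1 then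
      ∑ α : Equiv.Perm (Fin x.1), ∑ β : Equiv.Perm (Fin x.2),
        open Classical in if SumInd α then F (x.1 + x.2) (dsum α β) else 0 else 0 := by
  classical
  have h1 : ∀ π : Equiv.Perm (Fin n),
      F n π = ∑ x ∈ Finset.HasAntidiagonal.antidiagonal n, if FirstCut π x.1 then F n π else 0 := by
    intro π
    have hex : ∃ c, 1 ≤ c ∧ Cut π c := ⟨n, hn, fun a b _ h => absurd b.2 (not_lt.2 h)⟩
    have hle : Nat.find hex ≤ n :=
      Nat.find_min' hex ⟨hn, fun a b _ h => absurd b.2 (not_lt.2 h)⟩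
    have hfc : FirstCut π (Nat.find hex) :=
      ⟨(Nat.find_spec hex).1, (Nat.find_spec hex).2, fun c h1 h2 h3 =>
        Nat.find_min hex h2 ⟨h1, h3⟩⟩
    rw [Finset.sum_eq_single (Nat.find hex, n - Nat.find hex)]
    · simp [hfc]
    · rintro ⟨m, k⟩ hx hne
      rw [if_neg]
      intro hm
      apply hne
      have hmk := Finset.HasAntidiagonal.mem_antidiagonal.1 hx
      simp only at hmk hm
      have : m = Nat.find hex := by
        rcases lt_trichotomy m (Nat.find hex) with h | h | h
        · exact absurd hm.2.1 (hfc.2.2 m hm.1 h)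
        · exact h
        · exact absurd hfc.2.1 (hm.2.2 _ hfc.1 h)
      ext <;> simp <;> omega
    · intro h
      exact absurd (Finset.HasAntidiagonal.mem_antidiagonal.2 (by simp; omega)) h
  rw [Finset.sum_congr rfl fun π _ => h1 π, Finset.sum_comm]
  refine Finset.sum_congr rfl ?_
  rintro ⟨m, k⟩ hx
  obtain rfl : m + k = n := Finset.HasAntidiagonal.mem_antidiagonal.1 hx
  simp only
  split_ifs with hm
  · rw [← Fintype.sum_prod_type'
      (f := fun (α : Equiv.Perm (Fin m)) (β : Equiv.Perm (Fin k)) =>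
        if SumInd α then F (m + k) (dsum α β) else 0)]
    symm
    refine Finset.sum_of_injOn (fun x => dsum x.1 x.2) dsum_injective.injOn (by simp) ?_ ?_
    · intro π _ hπ
      rw [if_neg]
      intro h
      obtain ⟨α, β, rfl⟩ := exists_dsum π h.2.1
      exact hπ ⟨(α, β), by simp, rfl⟩
    · rintro ⟨α, β⟩ _
      simp only [firstCut_dsum hm]
  · exact Finset.sum_eq_zero fun π _ => if_neg fun h => hm h.1

/-! ### The structure theorem for permutations -/

/-- A separable permutation of size at least two is either a direct sum or a skew sum, not both:
exactly one of `π` and its complement is sum-indecomposable. -/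
theorem sumInd_xor {n : ℕ} (hn : 2 ≤ n) (π : Equiv.Perm (Fin n)) (hπ : Separable π) :
    SumInd (permCompl π) ↔ ¬ SumInd π := by
  have hcut : ∀ c, Cut (permCompl π) c ↔ ∀ a b : Fin n, (a : ℕ) < c → c ≤ (b : ℕ) → π b < π a := by
    intro c
    simp only [Cut, permCompl_lt]
  constructor
  · intro h1 h2
    obtain ⟨c, -, ⟨a, -, hac⟩, h | h⟩ := splits_of_avoids n (Finset.univ : Finset (Fin n))
      (fun i => ((π i : ℕ) : ℤ)) (by simp) (by simpa using hn)
      (fun a _ b _ e => by simpa [Fin.val_inj] using e)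
      (by
        intro a _ b _ c _ d _ h1 h2 h3
        simpa using (separable_iff π).1 hπ a b c d h1 h2 h3)
    · refine h2 c (by have : (a : ℕ) < c := hac; omega) c.2 fun x y hx hy => ?_
      simpa using h x (by simp) y (by simp) hx hy
    · refine h1 c (by have : (a : ℕ) < c := hac; omega) c.2 ((hcut _).2 fun x y hx hy => ?_)
      simpa using h x (by simp) y (by simp) hx hy
  · -- a direct sum has its first value below its last, a skew sum has it above
    intro h
    simp only [SumInd, not_forall, not_not] at h
    obtain ⟨c, hc1, hc2, hc⟩ := h
    intro d hd1 hd2 hd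
    have e1 := hc ⟨0, by omega⟩ ⟨n - 1, by omega⟩ (by simp; omega) (by simp; omega)
    have e2 := (hcut d).1 hd ⟨0, by omega⟩ ⟨n - 1, by omega⟩ (by simp; omega) (by simp; omega)
    exact absurd e1 (not_lt.2 e2.le)

/-! ### The initial ascending run -/

/-- The first `k` values of `π` are increasing. -/
def Asc {n : ℕ} (π : Equiv.Perm (Fin n)) (k : ℕ) : Prop :=
  ∀ i j : Fin n, (i : ℕ) < (j : ℕ) → (j : ℕ) < k → π i < π j

theorem le_iar_iff {n : ℕ} (π : Equiv.Perm (Fin n)) (k : ℕ) :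
    k ≤ iar π ↔ k ≤ n ∧ Asc π k := by
  constructor
  · intro h
    refine ⟨h.trans (Nat.findGreatest_le n), fun i j hij hj => ?_⟩
    have h0 : Asc π (iar π) := by
      unfold iar
      exact Nat.findGreatest_spec (P := fun k => ∀ i j : Fin n, (i : ℕ) < (j : ℕ) →
        (j : ℕ) < k → π i < π j) (Nat.zero_le n) (by intro i j _ h; omega)
    exact h0 i j hij (hj.trans_le h)
  · rintro ⟨h1, h2⟩
    exact Nat.le_findGreatest h1 h2

theorem iar_le {n : ℕ} (π : Equiv.Perm (Fin n)) : iar π ≤ n := Nat.findGreatest_le n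

theorem one_le_iar {n : ℕ} (hn : 1 ≤ n) (π : Equiv.Perm (Fin n)) : 1 ≤ iar π :=
  (le_iar_iff π 1).2 ⟨hn, fun i j h1 h2 => by omega⟩

theorem asc_dsum {m k c : ℕ} (α : Equiv.Perm (Fin m)) (β : Equiv.Perm (Fin k)) (hc : c ≤ m) :
    Asc (dsum α β) c ↔ Asc α c := by
  constructor
  · intro h a b h1 h2
    have := h (Fin.castAdd k a) (Fin.castAdd k b) (by simpa using h1) (by simpa using h2)
    simpa using this
  · intro h a b
    refine Fin.addCases (fun a => ?_) (fun a => ?_) a <;>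
      refine Fin.addCases (fun b => ?_) (fun b => ?_) b <;> intro h1 h2
    · simpa using h a b (by simpa using h1) (by simpa using h2)
    · simp at h2; omega
    · simp at h1 h2; omega
    · simp at h1 h2; omega

/-- An indecomposable first component of size at least two is not increasing, so it contains
the whole initial ascending run. -/
theorem iar_dsum {m k : ℕ} (hm : 2 ≤ m) (α : Equiv.Perm (Fin m)) (hα : SumInd α)
    (β : Equiv.Perm (Fin k)) : iar (dsum α β) = iar α := by
  have hnot : ¬ Asc α m := by
    intro h
    refine hα 1 le_rfl (by omega) fun a b ha hb => ?_
    exact h a b (by omega) b.2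
  refine eq_of_forall_le_iff fun c => ?_
  rw [le_iar_iff, le_iar_iff]
  rcases le_or_gt c m with h | h
  · rw [asc_dsum α β h]
    constructor
    · exact fun x => ⟨h, x.2⟩
    · exact fun x => ⟨by omega, x.2⟩
  · refine iff_of_false (fun hx => hnot ?_) (fun hx => by omega)
    exact (asc_dsum α β le_rfl).1 fun i j h1 h2 => hx.2 i j h1 (by omega)

theorem iar_one_dsum {k : ℕ} (α : Equiv.Perm (Fin 1)) (β : Equiv.Perm (Fin k)) :
    iar (dsum α β) = iar β + 1 := by
  refine eq_of_forall_le_iff fun c => ?_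
  rcases Nat.eq_zero_or_pos c with rfl | hc
  · simp
  obtain ⟨c, rfl⟩ : ∃ c', c = c' + 1 := ⟨c - 1, by omega⟩
  rw [Nat.add_le_add_iff_right, le_iar_iff, le_iar_iff]
  refine and_congr (by omega) ⟨fun h a b h1 h2 => ?_, fun h a b => ?_⟩
  · have := h (Fin.natAdd 1 a) (Fin.natAdd 1 b) (by simpa using h1) (by simp; omega)
    simpa using this
  · refine Fin.addCases (fun a => ?_) (fun a => ?_) a <;>
      refine Fin.addCases (fun b => ?_) (fun b => ?_) b <;> intro h1 h2
    · simp at h1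
    · exact cut_dsum α β _ _ (by simp) (by simp)
    · simp at h1
    · simpa using h a b (by simpa using h1) (by simp at h2; omega)

/-- In a skew sum the initial ascending run ends with the first summand at the latest. -/
theorem iar_permCompl_dsum {m k : ℕ} (hm : 1 ≤ m) (α : Equiv.Perm (Fin m))
    (β : Equiv.Perm (Fin k)) : iar (permCompl (dsum α β)) = iar (permCompl α) := by
  refine eq_of_forall_le_iff fun c => ?_
  rw [le_iar_iff, le_iar_iff]
  simp only [Asc, permCompl_lt]
  constructor
  · rintro ⟨h1, h2⟩
    have hcm : c ≤ m := by
      by_contra hcm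
      have e1 := h2 ⟨0, by omega⟩ ⟨m, by omega⟩ (by simp; omega) (by simp; omega)
      have e2 := cut_dsum α β ⟨0, by omega⟩ ⟨m, by omega⟩ (by simp; omega) (by simp)
      exact absurd e1 (not_lt.2 e2.le)
    refine ⟨hcm, fun a b h3 h4 => ?_⟩
    have := h2 (Fin.castAdd k a) (Fin.castAdd k b) (by simpa using h3) (by simpa using h4)
    simpa using this
  · rintro ⟨h1, h2⟩
    refine ⟨by omega, fun a b => ?_⟩
    refine Fin.addCases (fun a => ?_) (fun a => ?_) a <;>
      refine Fin.addCases (fun b => ?_) (fun b => ?_) b <;> intro h3 h4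
    · simpa using h2 a b (by simpa using h3) (by simpa using h4)
    · simp at h4; omega
    · simp at h3 h4; omega
    · simp at h3 h4; omega

/-! ### Generating functions -/


open scoped Classical in
/-- The weight `w ^ (iar π - 1)` of a separable permutation; other permutations have weight `0`.
The empty permutation has weight `1`, by truncated subtraction. -/
noncomputable def weight (w : ℤ) {n : ℕ} (π : Equiv.Perm (Fin n)) : ℤ :=
  if Separable π then w ^ (iar π - 1) else 0

/-- The generating function of all separable permutations, the empty one included. -/
noncomputable def genAll (w : ℤ) : PowerSeries ℤ :=
  PowerSeries.mk fun n => ∑ π : Equiv.Perm (Fin n), weight w π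

open scoped Classical in
/-- The generating function of sum-indecomposable separable permutations of size at least two. -/
noncomputable def genSumInd (w : ℤ) : PowerSeries ℤ :=
  PowerSeries.mk fun n =>
    if 2 ≤ n then ∑ π : Equiv.Perm (Fin n), if SumInd π then weight w π else 0 else 0

open scoped Classical in
/-- The generating function of nonempty skew-indecomposable separable permutations, which are
listed as complements of sum-indecomposable ones. -/
noncomputable def genSkewInd (w : ℤ) : PowerSeries ℤ :=
  PowerSeries.mk fun n =>
    if 1 ≤ n then ∑ π : Equiv.Perm (Fin n), if SumInd π then weight w (permCompl π) else 0 else 0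

open scoped Classical in
/-- The generating function of separable permutations `π` weighted by `w ^ iar π`. -/
noncomputable def genShift (w : ℤ) : PowerSeries ℤ :=
  PowerSeries.mk fun n =>
    ∑ π : Equiv.Perm (Fin n), if Separable π then w ^ iar π else 0

theorem separable_of_le_one {n : ℕ} (hn : n ≤ 1) (π : Equiv.Perm (Fin n)) : Separable π :=
  (separable_iff π).2 fun a b _ _ h => by omega

theorem iar_zero (π : Equiv.Perm (Fin 0)) : iar π = 0 := Nat.le_zero.1 (iar_le π)

theorem coeff_zero_genAll (w : ℤ) : PowerSeries.coeff 0 (genAll w) = 1 := by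
  simp [genAll, weight, separable_of_le_one, iar_zero]

theorem weight_permCompl_dsum (w : ℤ) {m k : ℕ} (hm : 1 ≤ m) (α : Equiv.Perm (Fin m))
    (β : Equiv.Perm (Fin k)) :
    weight w (permCompl (dsum α β)) = weight w (permCompl α) * weight 1 (permCompl β) := by
  by_cases h1 : Separable α <;> by_cases h2 : Separable β <;>
    simp [weight, separable_permCompl, separable_dsum, iar_permCompl_dsum hm, h1, h2]

theorem weight_dsum (w : ℤ) {m k : ℕ} (hm : 2 ≤ m) (α : Equiv.Perm (Fin m)) (hα : SumInd α)
    (β : Equiv.Perm (Fin k)) : weight w (dsum α β) = weight w α * weight 1 β := by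
  by_cases h1 : Separable α <;> by_cases h2 : Separable β <;>
    simp [weight, separable_dsum, iar_dsum hm α hα, h1, h2]

/-- A nonempty separable permutation is uniquely the skew sum of a skew-indecomposable one,
which determines `iar`, and an arbitrary one. -/
theorem genAll_eq_skew (w : ℤ) : genAll w = 1 + genSkewInd w * genAll 1 := by
  classical
  ext n
  rcases Nat.eq_zero_or_pos n with rfl | hn
  · rw [coeff_zero_genAll]
    simp [genSkewInd]
  rw [map_add, PowerSeries.coeff_one, if_neg (by omega), zero_add, PowerSeries.coeff_mul, genAll,
    PowerSeries.coeff_mk, ← sum_permCompl,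
    sum_firstCut (fun n π => weight w (permCompl π)) n hn]
  refine Finset.sum_congr rfl ?_
  rintro ⟨m, k⟩ -
  simp only [genSkewInd, genAll, PowerSeries.coeff_mk]
  split_ifs with hm
  · rw [← sum_permCompl (n := k), Finset.sum_mul_sum]
    refine Finset.sum_congr rfl fun α _ => Finset.sum_congr rfl fun β _ => ?_
    rw [weight_permCompl_dsum w hm, ite_mul, zero_mul]
  · simp

theorem genShift_eq (w : ℤ) : genShift w = 1 + PowerSeries.C w * (genAll w - 1) := by
  classical
  ext n
  rw [map_add, PowerSeries.coeff_C_mul, map_sub, PowerSeries.coeff_one]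
  rcases Nat.eq_zero_or_pos n with rfl | hn
  · rw [coeff_zero_genAll]
    simp [genShift, separable_of_le_one, iar_zero]
  rw [if_neg (by omega), zero_add, sub_zero, genAll, genShift, PowerSeries.coeff_mk,
    PowerSeries.coeff_mk, Finset.mul_sum]
  refine Finset.sum_congr rfl fun π _ => ?_
  rw [weight, mul_ite, mul_zero, ← pow_succ', Nat.sub_add_cancel (one_le_iar hn π)]

/-- A nonempty separable permutation is uniquely the direct sum of a sum-indecomposable one and
an arbitrary one; the first summand determines `iar` unless it is a single point. -/
theorem genAll_eq_sum (w : ℤ) :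
    genAll w = 1 + PowerSeries.X * genShift w + genSumInd w * genAll 1 := by
  classical
  ext n
  rw [map_add, map_add, PowerSeries.coeff_one]
  rcases Nat.eq_zero_or_pos n with rfl | hn
  · rw [coeff_zero_genAll]
    simp [genSumInd]
  rw [if_neg (by omega), zero_add, PowerSeries.coeff_mul, PowerSeries.coeff_mul,
    ← Finset.sum_add_distrib]
  conv_lhs => rw [genAll, PowerSeries.coeff_mk, sum_firstCut (fun n π => weight w π) n hn]
  refine Finset.sum_congr rfl ?_
  rintro ⟨m, k⟩ -
  simp only [genSumInd, genShift, genAll, PowerSeries.coeff_mk, PowerSeries.coeff_X]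
  rcases (by omega : m = 0 ∨ m = 1 ∨ 2 ≤ m) with rfl | rfl | hm
  · simp
  · have hind : ∀ α : Equiv.Perm (Fin 1), SumInd α := fun α c h1 h2 => by omega
    simp [hind, weight, separable_dsum, iar_one_dsum, separable_of_le_one]
  · rw [if_pos (by omega), if_neg (by omega), if_pos hm, zero_mul, zero_add, Finset.sum_mul_sum]
    refine Finset.sum_congr rfl fun α _ => Finset.sum_congr rfl fun β _ => ?_
    split_ifs with h
    · exact weight_dsum w hm α h β
    · simp

/-- Each separable permutation of size at least two is exactly one of sum-indecomposable and
skew-indecomposable. -/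
theorem genSumInd_add_genSkewInd (w : ℤ) : genSumInd w + genSkewInd w = genAll w - 1 := by
  classical
  ext n
  rw [map_add, map_sub, PowerSeries.coeff_one]
  rcases (by omega : n = 0 ∨ n = 1 ∨ 2 ≤ n) with rfl | rfl | hn
  · rw [coeff_zero_genAll]
    simp [genSumInd, genSkewInd]
  · have hind : ∀ α : Equiv.Perm (Fin 1), SumInd α := fun α c h1 h2 => by omega
    simp only [genSumInd, genSkewInd, genAll, PowerSeries.coeff_mk, hind]
    simpa using sum_permCompl (fun π : Equiv.Perm (Fin 1) => weight w π)
  · simp only [genSumInd, genSkewInd, genAll, PowerSeries.coeff_mk]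
    rw [if_pos hn, if_pos (by omega), if_neg (by omega), sub_zero,
      ← sum_permCompl (fun π => if SumInd π then weight w (permCompl π) else 0),
      ← Finset.sum_add_distrib]
    refine Finset.sum_congr rfl fun π _ => ?_
    rw [permCompl_permCompl]
    by_cases hs : Separable π
    · rw [sumInd_xor hn π hs]
      by_cases h : SumInd π <;> simp [h]
    · simp [weight, hs]

theorem genAll_functional (w : ℤ) :
    (genAll w - 1) * (2 - genAll 1) =
      PowerSeries.X * (1 + PowerSeries.C w * (genAll w - 1)) := by
  have h1 := genAll_eq_skew w
  have h2 := genAll_eq_sum w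
  have h3 := genSumInd_add_genSkewInd w
  rw [genShift_eq] at h2
  linear_combination h2 + h1 + genAll 1 * h3

/-- Elimination of `genAll 1` from the functional equations at `w = 0, 1, 2`. -/
theorem genAll_zero_eq : genAll 0 - 1 = PowerSeries.X * genAll 2 := by
  have h0 := genAll_functional 0
  have h1 := genAll_functional 1
  have h2 := genAll_functional 2
  have hC : (PowerSeries.C (2 : ℤ) : PowerSeries ℤ) = 2 := map_ofNat _ 2
  simp only [map_zero, map_one, hC] at h0 h1 h2
  have hc : PowerSeries.constantCoeff (genAll 1) = 1 := by
    rw [← PowerSeries.coeff_zero_eq_constantCoeff_apply, coeff_zero_genAll]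
  have hc2 : PowerSeries.constantCoeff (2 : PowerSeries ℤ) = 2 := map_ofNat _ 2
  have hne1 : (2 - genAll 1 : PowerSeries ℤ) ≠ 0 := by
    intro h
    have := congrArg PowerSeries.constantCoeff h
    simp [hc, hc2] at this
  have hne2 : (2 - genAll 1 - 2 * PowerSeries.X : PowerSeries ℤ) ≠ 0 := by
    intro h
    have := congrArg PowerSeries.constantCoeff h
    simp [hc, hc2] at this
  apply mul_right_cancel₀ hne1
  apply mul_right_cancel₀ hne2
  linear_combination (2 - genAll 1 - 2 * PowerSeries.X) * h0
    - PowerSeries.X * (2 - genAll 1) * h2 + PowerSeries.X * h1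

open scoped Classical in
theorem p_eq_sum (n k : ℕ) : (p n k : ℤ) =
    ∑ π : Equiv.Perm (Fin n), if Separable π ∧ iar π = k then 1 else 0 := by
  rw [p, Nat.card_eq_fintype_card, Fintype.card_subtype, Finset.sum_boole]

theorem coeff_genAll_zero {n : ℕ} (hn : 1 ≤ n) : PowerSeries.coeff n (genAll 0) = p n 1 := by
  classical
  rw [p_eq_sum, genAll, PowerSeries.coeff_mk]
  refine Finset.sum_congr rfl fun π _ => ?_
  have := one_le_iar hn π
  by_cases hs : Separable π
  · by_cases hi : iar π = 1
    · simp [weight, hs, hi]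
    · have : iar π - 1 ≠ 0 := by omega
      simp [weight, hs, hi, this]
  · simp [weight, hs]

theorem coeff_genAll {n : ℕ} (hn : 1 ≤ n) (w : ℤ) :
    PowerSeries.coeff n (genAll w) = ∑ j ∈ Finset.Ico 1 (n + 1), w ^ (j - 1) * p n j := by
  classical
  simp only [p_eq_sum, Finset.mul_sum]
  rw [Finset.sum_comm, genAll, PowerSeries.coeff_mk]
  refine Finset.sum_congr rfl fun π _ => ?_
  have h1 := one_le_iar hn π
  have h2 := iar_le π
  by_cases hs : Separable π
  · simp only [weight, hs, if_true, true_and, mul_ite, mul_one, mul_zero]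
    rw [Finset.sum_ite_eq, if_pos (Finset.mem_Ico.2 ⟨h1, by omega⟩)]
  · simp [weight, hs]

/-- For every integer `n ≥ 2`, `p(n,1) = Σ_{j=1}^{n-1} 2^{j-1} ⬝ p(n-1,j)`. -/
theorem stmt7 (n : ℕ) (hn : 2 ≤ n) :
    p n 1 = ∑ j ∈ Finset.Ico 1 n, 2 ^ (j - 1) * p (n - 1) j := by
  obtain ⟨n, rfl⟩ : ∃ m, n = m + 1 := ⟨n - 1, by omega⟩
  have h := congrArg (PowerSeries.coeff (n + 1)) genAll_zero_eq
  rw [PowerSeries.coeff_succ_X_mul, map_sub, PowerSeries.coeff_one, if_neg (by omega), sub_zero,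
    coeff_genAll_zero (by omega), coeff_genAll (by omega)] at h
  exact_mod_cast h
end
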